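/- Let α be a graph function, let m1 be the maximum edge weight of α, and let w1 be the minimum over all directed cycles of G of the average weight of the cycle under α. Then for every graph function α' obtained from α by any finite sequence of balancing operations and for every edge (u,v) of G, α'_{uv} ≥ w1 − (n−1)(m1 − w1). -/

import Mathlib

open Filter Topology

variable {V : Type*}

/-- Maximum weight of an edge leaving `v` (as a supremum over the finite edge set). -/
noncomputable def outMax (E : V → V → Prop) (α : V → V → ℝ) (v : V) : ℝ :=
  sSup {x : ℝ | ∃ w, E v w ∧ x = α v w}

/-- Maximum weight of an edge entering `v`. -/
noncomputable def inMax (E : V → V → Prop) (α : V → V → ℝ) (v : V) : ℝ :=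
  sSup {x : ℝ | ∃ u, E u v ∧ x = α u v}

/-- A graph function is balanced if the max outgoing weight equals the max incoming
weight at every vertex. -/
def IsBalancedGF (E : V → V → Prop) (α : V → V → ℝ) : Prop :=
  ∀ v, outMax E α v = inMax E α v

/-- Raising imbalance at `v`. -/
noncomputable def rhoR (E : V → V → Prop) (α : V → V → ℝ) (v : V) : ℝ :=
  max 0 (outMax E α v - inMax E α v)

/-- Lowering imbalance at `v`. -/
noncomputable def rhoL (E : V → V → Prop) (α : V → V → ℝ) (v : V) : ℝ :=
  max 0 (inMax E α v - outMax E α v)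

/-- A balancing operation at `v`: add `(α_v^out − α_v^in)/2` to every edge entering `v`
and subtract the same quantity from every edge leaving `v` (a self-loop is unchanged). -/
noncomputable def balanceAt [DecidableEq V] (E : V → V → Prop) (α : V → V → ℝ) (v : V) :
    V → V → ℝ :=
  fun a b =>
    α a b + (if b = v then (outMax E α v - inMax E α v) / 2 else 0)
          - (if a = v then (outMax E α v - inMax E α v) / 2 else 0)

/-- A raising operation at `v`: balance at `v` if the raising imbalance is positive,
otherwise do nothing. -/
noncomputable def raiseOp [DecidableEq V] (E : V → V → Prop) (α : V → V → ℝ) (v : V) :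
    V → V → ℝ :=
  if 0 < rhoR E α v then balanceAt E α v else α

/-- A lowering operation at `v`: balance at `v` if the lowering imbalance is positive,
otherwise do nothing. -/
noncomputable def lowerOp [DecidableEq V] (E : V → V → Prop) (α : V → V → ℝ) (v : V) :
    V → V → ℝ :=
  if 0 < rhoL E α v then balanceAt E α v else α

/-- A sequence of vertices is fair if every vertex appears infinitely often. -/
def Fair (σ : ℕ → V) : Prop := ∀ (v : V) (N : ℕ), ∃ t, N ≤ t ∧ σ t = v

/-- State after `t` raising operations along the sequence `σ`. -/
noncomputable def raiseIter [DecidableEq V] (E : V → V → Prop) (α : V → V → ℝ)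
    (σ : ℕ → V) : ℕ → V → V → ℝ
  | 0 => α
  | t + 1 => raiseOp E (raiseIter E α σ t) (σ t)

/-- State after `t` lowering operations along the sequence `σ`. -/
noncomputable def lowerIter [DecidableEq V] (E : V → V → Prop) (α : V → V → ℝ)
    (σ : ℕ → V) : ℕ → V → V → ℝ
  | 0 => α
  | t + 1 => lowerOp E (lowerIter E α σ t) (σ t)

/-- The raising vector: cumulative amount by which each vertex has been raised after
`t` raising operations along `σ`. -/
noncomputable def rvec [DecidableEq V] (E : V → V → Prop) (α : V → V → ℝ)
    (σ : ℕ → V) : ℕ → V → ℝ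
  | 0 => fun _ => 0
  | t + 1 => fun u =>
      rvec E α σ t u + (if u = σ t then rhoR E (raiseIter E α σ t) (σ t) / 2 else 0)

/-- State after performing raising operations along a finite list of vertices. -/
noncomputable def raiseList [DecidableEq V] (E : V → V → Prop) :
    (V → V → ℝ) → List V → V → V → ℝ
  | α, [] => α
  | α, v :: l => raiseList E (raiseOp E α v) l

/-- Raising vector accumulated along a finite list of raising operations. -/
noncomputable def rvecList [DecidableEq V] (E : V → V → Prop) :
    (V → V → ℝ) → List V → V → ℝ
  | _, [] => fun _ => 0
  | α, v :: l => fun u =>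
      (if u = v then rhoR E α v / 2 else 0) + rvecList E (raiseOp E α v) l u

/-- State after performing (unconditional) balancing operations along a list. -/
noncomputable def balList [DecidableEq V] (E : V → V → Prop) :
    (V → V → ℝ) → List V → V → V → ℝ
  | α, [] => α
  | α, v :: l => balList E (balanceAt E α v) l

/-- State after `t` balancing operations along the sequence `σ`. -/
noncomputable def balIter [DecidableEq V] (E : V → V → Prop) (α : V → V → ℝ)
    (σ : ℕ → V) : ℕ → V → V → ℝ
  | 0 => α
  | t + 1 => balanceAt E (balIter E α σ t) (σ t)

/-- Two graph functions are equivalent if their sums around every directed cycle agree. -/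
def Equivalent (E : V → V → Prop) (α γ : V → V → ℝ) : Prop :=
  ∀ (k : ℕ) (f : ZMod (k + 1) → V), (∀ i, E (f i) (f (i + 1))) →
    (∑ i, α (f i) (f (i + 1))) = ∑ i, γ (f i) (f (i + 1))

/-- The raising-balanced graph function determined by the limiting raising vector. -/
noncomputable def alphaR (α : V → V → ℝ) (rstar : V → ℝ) : V → V → ℝ :=
  fun u v => α u v + rstar v - rstar u

/-- Height of a vertex: `y_v = -r*_v`. -/
noncomputable def height (rstar : V → ℝ) (v : V) : ℝ := -rstar v

/-- Level of a vertex: maximum over incoming edges of `α^R`. -/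
noncomputable def level (E : V → V → Prop) (α : V → V → ℝ) (rstar : V → ℝ) (v : V) : ℝ :=
  inMax E (alphaR α rstar) v

/-- Momentum of a vertex: `m_v = max over edges (u,v) entering v of (α_{uv} − x_v)`. -/
noncomputable def momentum (E : V → V → Prop) (α : V → V → ℝ) (rstar : V → ℝ) (v : V) : ℝ :=
  sSup {c : ℝ | ∃ u, E u v ∧ c = α u v - level E α rstar v}

/-! Every balancing operation has the form `α ↦ alphaR α r`, so it preserves cycle sums, and it
never raises the maximum weight. Close the edge `(u, v)` up to a cycle with a walk of `k` edges from
`v` to `u`. After the balancing the cycle still has total weight at least `(k + 1) w`, while its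
other `k` edges weigh at most `m` each, which leaves at least `(k + 1) w - k m = w - k (m - w)` for
`(u, v)`. A walk without repeated vertices has `k ≤ n - 1`. -/

section Cycles

variable {E : V → V → Prop} {k : ℕ} {p : Fin (k + 1) → V}

/-- The average weights of the directed cycles of `E`. Vertices may repeat, so these are the closed
walks; the infimum is the same as over simple cycles. -/
def cycleMeans (E : V → V → Prop) (α : V → V → ℝ) : Set ℝ :=
  {x | ∃ (k : ℕ) (f : ZMod (k + 1) → V), (∀ i, E (f i) (f (i + 1))) ∧
    x = (∑ i, α (f i) (f (i + 1))) / ((k : ℝ) + 1)}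

theorem edge_of_walk_of_closing_edge (hp : ∀ i : Fin k, E (p i.castSucc) (p i.succ))
    (hclose : E (p (Fin.last k)) (p 0)) (i : Fin (k + 1)) : E (p i) (p (i + 1)) := by
  cases i using Fin.lastCases with
  | last => simpa using hclose
  | cast i => simpa using hp i

theorem sum_closed_walk_eq_sum_walk_add {M : Type*} [AddCommMonoid M] (g : V → V → M)
    (p : Fin (k + 1) → V) :
    ∑ i, g (p i) (p (i + 1)) =
      ∑ i : Fin k, g (p i.castSucc) (p i.succ) + g (p (Fin.last k)) (p 0) := by
  simp [Fin.sum_univ_castSucc]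

theorem mul_le_cycle_sum {α : V → V → ℝ} {w : ℝ} (hw : w ∈ lowerBounds (cycleMeans E α))
    {f : ZMod (k + 1) → V} (hf : ∀ i, E (f i) (f (i + 1))) :
    w * (k + 1) ≤ ∑ i, α (f i) (f (i + 1)) :=
  (le_div_iff₀ (by positivity)).1 (hw ⟨k, f, hf, rfl⟩)

end Cycles

section Walks

theorem exists_nodup_isChain_of_reflTransGen {r : V → V → Prop} {a b : V}
    (h : Relation.ReflTransGen r a b) :
    ∃ l : List V, (a :: l).IsChain r ∧ (a :: l).Nodup ∧
      (a :: l).getLast (List.cons_ne_nil a l) = b := by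
  induction h using Relation.ReflTransGen.head_induction_on with
  | refl => exact ⟨[], by simp⟩
  | @head a c hac _ ih =>
    obtain ⟨l, hchain, hnodup, hlast⟩ := ih
    by_cases ha : a ∈ c :: l
    · obtain ⟨s, t, hst⟩ := List.append_of_mem ha
      simp only [hst] at hchain hnodup hlast
      exact ⟨t, hchain.right_of_append, hnodup.of_append_right, by simpa using hlast⟩
    · exact ⟨c :: l, hchain.cons_cons hac, hnodup.cons ha, by simpa using hlast⟩

theorem exists_injective_walk_of_reflTransGen {r : V → V → Prop} {a b : V}
    (h : Relation.ReflTransGen r a b) :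
    ∃ (k : ℕ) (p : Fin (k + 1) → V), Function.Injective p ∧ p 0 = a ∧ p (Fin.last k) = b ∧
      ∀ i : Fin k, r (p i.castSucc) (p i.succ) := by
  obtain ⟨l, hchain, hnodup, hlast⟩ := exists_nodup_isChain_of_reflTransGen h
  refine ⟨l.length, (a :: l).get, hnodup.injective_get, rfl, ?_, fun i => ?_⟩
  · simpa [List.getLast_eq_getElem] using hlast
  · exact List.isChain_iff_getElem.1 hchain i (by simp)

end Walks

section Equivalence

variable {E : V → V → Prop} {α β γ : V → V → ℝ}

theorem Equivalent.refl (E : V → V → Prop) (α : V → V → ℝ) : Equivalent E α α :=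
  fun _ _ _ => rfl

theorem Equivalent.trans (hαβ : Equivalent E α β) (hβγ : Equivalent E β γ) : Equivalent E α γ :=
  fun k f hf => (hαβ k f hf).trans (hβγ k f hf)

theorem equivalent_alphaR (E : V → V → Prop) (α : V → V → ℝ) (r : V → ℝ) :
    Equivalent E α (alphaR α r) := by
  intro k f _
  have rotate : ∑ i, r (f (i + 1)) = ∑ i, r (f i) :=
    Equiv.sum_comp (Equiv.addRight (1 : ZMod (k + 1))) fun i => r (f i)
  simp only [alphaR, Finset.sum_sub_distrib, Finset.sum_add_distrib, rotate, add_sub_cancel_right]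

theorem Equivalent.sub_mul_le_closing_edge {m w : ℝ} (h : Equivalent E α β)
    (hw : w ∈ lowerBounds (cycleMeans E α)) (hβ : ∀ a b, E a b → β a b ≤ m)
    {k : ℕ} {p : Fin (k + 1) → V} (hp : ∀ i : Fin k, E (p i.castSucc) (p i.succ))
    (hclose : E (p (Fin.last k)) (p 0)) :
    w - k * (m - w) ≤ β (p (Fin.last k)) (p 0) := by
  have hcycle := edge_of_walk_of_closing_edge hp hclose
  have hwalk : ∑ i : Fin k, β (p i.castSucc) (p i.succ) ≤ k * m := by
    simpa using Finset.sum_le_card_nsmul Finset.univ _ m fun i _ => hβ _ _ (hp i)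
  have hsum : w * (k + 1) ≤ k * m + β (p (Fin.last k)) (p 0) := calc
    w * (k + 1) ≤ ∑ i, α (p i) (p (i + 1)) := mul_le_cycle_sum hw hcycle
    _ = ∑ i, β (p i) (p (i + 1)) := h k p hcycle
    _ = ∑ i : Fin k, β (p i.castSucc) (p i.succ) + β (p (Fin.last k)) (p 0) :=
      sum_closed_walk_eq_sum_walk_add β p
    _ ≤ k * m + β (p (Fin.last k)) (p 0) := by gcongr
  linarith

theorem Equivalent.sub_card_sub_one_mul_le [Fintype V] {m w : ℝ} (h : Equivalent E α β)
    (hw : w ∈ lowerBounds (cycleMeans E α)) (hβ : ∀ a b, E a b → β a b ≤ m)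
    {u v : V} (huv : E u v) (hvu : Relation.ReflTransGen E v u) :
    w - ((Fintype.card V : ℝ) - 1) * (m - w) ≤ β u v := by
  obtain ⟨k, p, hinj, rfl, rfl, hp⟩ := exists_injective_walk_of_reflTransGen hvu
  have hbound := h.sub_mul_le_closing_edge hw hβ hp huv
  have hk : (k : ℝ) + 1 ≤ Fintype.card V := by
    exact_mod_cast (Fintype.card_fin (k + 1)).symm.trans_le (Fintype.card_le_of_injective p hinj)
  have hwm : w ≤ m := by
    have : 0 ≤ (k + 1) * (m - w) := by linarith [hβ _ _ huv]
    exact sub_nonneg.1 (nonneg_of_mul_nonneg_right this (by positivity))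
  calc
    w - ((Fintype.card V : ℝ) - 1) * (m - w) ≤ w - k * (m - w) := by
      gcongr
      linarith
    _ ≤ β (p (Fin.last k)) (p 0) := hbound

end Equivalence

section Balancing

variable {E : V → V → Prop} {α : V → V → ℝ} {m : ℝ} {v : V}

theorem le_outMax (h : ∀ w, E v w → α v w ≤ m) {w : V} (hvw : E v w) : α v w ≤ outMax E α v :=
  le_csSup ⟨m, by rintro _ ⟨w, hw, rfl⟩; exact h w hw⟩ ⟨w, hvw, rfl⟩

theorem outMax_le (hv : ∃ w, E v w) (h : ∀ w, E v w → α v w ≤ m) : outMax E α v ≤ m := by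
  obtain ⟨w, hw⟩ := hv
  exact csSup_le ⟨_, w, hw, rfl⟩ (by rintro _ ⟨w, hw, rfl⟩; exact h w hw)

theorem le_inMax (h : ∀ u, E u v → α u v ≤ m) {u : V} (huv : E u v) : α u v ≤ inMax E α v :=
  le_outMax (E := flip E) (α := flip α) h huv

theorem inMax_le (hv : ∃ u, E u v) (h : ∀ u, E u v → α u v ≤ m) : inMax E α v ≤ m :=
  outMax_le (E := flip E) (α := flip α) hv h

variable [DecidableEq V]

theorem balanceAt_eq_alphaR (E : V → V → Prop) (α : V → V → ℝ) (v : V) :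
    balanceAt E α v = alphaR α (Pi.single v ((outMax E α v - inMax E α v) / 2)) := by
  ext a b
  simp only [balanceAt, alphaR, Pi.single_apply]

theorem equivalent_balanceAt (E : V → V → Prop) (α : V → V → ℝ) (v : V) :
    Equivalent E α (balanceAt E α v) :=
  balanceAt_eq_alphaR E α v ▸ equivalent_alphaR E α _

theorem equivalent_balList (E : V → V → Prop) (α : V → V → ℝ) (l : List V) :
    Equivalent E α (balList E α l) := by
  induction l generalizing α with
  | nil => exact .refl E α
  | cons v l ih => exact (equivalent_balanceAt E α v).trans (ih _)

theorem balanceAt_le (hout : ∃ w, E v w) (hin : ∃ u, E u v) (h : ∀ a b, E a b → α a b ≤ m)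
    {a b : V} (hab : E a b) : balanceAt E α v a b ≤ m := by
  have hout_le : outMax E α v ≤ m := outMax_le hout (h v)
  have hin_le : inMax E α v ≤ m := inMax_le hin (h · v)
  have hab_le : α a b ≤ m := h a b hab
  unfold balanceAt
  -- An edge at `v` that is not a loop ends up at most the average of `outMax` and `inMax`.
  split_ifs with hb ha ha
  · linarith
  · subst hb
    linarith [le_inMax (h · b) hab]
  · subst ha
    linarith [le_outMax (h a) hab]
  · linarith

theorem balList_le (hout : ∀ v, ∃ w, E v w) (hin : ∀ v, ∃ u, E u v)
    (h : ∀ a b, E a b → α a b ≤ m) (l : List V) {a b : V} (hab : E a b) :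
    balList E α l a b ≤ m := by
  induction l generalizing α with
  | nil => exact h a b hab
  | cons v _ ih => exact ih fun _ _ => balanceAt_le (hout v) (hin v) h

end Balancing

theorem edge_weights_bounded_below_general [Fintype V] [DecidableEq V] {E : V → V → Prop}
    (hout : ∀ v, ∃ w, E v w) (hin : ∀ v, ∃ u, E u v) {α : V → V → ℝ} {m w : ℝ}
    (hm : ∀ a b, E a b → α a b ≤ m) (hw : w ∈ lowerBounds (cycleMeans E α)) (l : List V)
    {u v : V} (huv : E u v) (hvu : Relation.ReflTransGen E v u) :
    w - ((Fintype.card V : ℝ) - 1) * (m - w) ≤ balList E α l u v :=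
  (equivalent_balList E α l).sub_card_sub_one_mul_le hw
    (fun _ _ => balList_le hout hin hm l) huv hvu

/-- With `m1` the maximum edge weight of `α` and `w1` the minimum
average weight of a directed cycle of `G` under `α`, every edge weight obtainable from
`α` by a finite sequence of balancing operations is at least
`w1 − (n−1)(m1 − w1)`. -/
theorem edge_weights_bounded_below
    [Fintype V] [Nonempty V] [DecidableEq V] (E : V → V → Prop)
    (hout : ∀ v, ∃ w, E v w) (hin : ∀ v, ∃ u, E u v)
    (hconn : ∀ u v : V, Relation.ReflTransGen E u v)
    (α : V → V → ℝ) (m1 w1 : ℝ)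
    (hm1 : IsGreatest {x : ℝ | ∃ u v, E u v ∧ x = α u v} m1)
    (hw1 : IsLeast {x : ℝ | ∃ (k : ℕ) (f : ZMod (k + 1) → V),
      (∀ i, E (f i) (f (i + 1))) ∧
      x = (∑ i, α (f i) (f (i + 1))) / ((k : ℝ) + 1)} w1) :
    ∀ (l : List V) (u v : V), E u v →
      w1 - ((Fintype.card V : ℝ) - 1) * (m1 - w1) ≤ balList E α l u v := fun l u v huv =>
  edge_weights_bounded_below_general hout hin (fun a b hab => hm1.2 ⟨a, b, hab, rfl⟩) hw1.2 l huv
    (hconn v u)
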